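/- Let U : ℝ^d → ℝ be differentiable with L-Lipschitz gradient and unique global minimizer θ*, and let β > 0. Let π_θ be the Gibbs measure with density ρ(θ) = exp(-βU(θ))/Z_β, and suppose ∫ ‖θ‖² dπ_θ(θ) ≤ C_β/β with θ* = 0. Then Ū_β - U(θ*) ≤ (d/(2β)) log(e·C_β·L/d), where Ū_β = ∫ U dπ_θ. -/

import Mathlib

open Real MeasureTheory

/-- A function with `L`-Lipschitz gradient and a global minimum at the origin is bounded above by
the quadratic `U 0 + L / 2 * ‖θ‖ ^ 2`. -/
theorem le_add_sq_norm_of_gradient_lipschitz {E : Type*} [NormedAddCommGroup E]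
    [InnerProductSpace ℝ E] [CompleteSpace E] {U : E → ℝ} {L : ℝ} (hdiff : Differentiable ℝ U)
    (hlip : ∀ x y : E, ‖gradient U x - gradient U y‖ ≤ L * ‖x - y‖)
    (hmin : ∀ x, U 0 ≤ U x) (x : E) : U x ≤ U 0 + L / 2 * ‖x‖ ^ 2 := by
  have hgrad0 : gradient U 0 = 0 := by
    have h : IsLocalMin U 0 := Filter.Eventually.of_forall hmin
    simp [gradient, h.fderiv_eq_zero]
  have hderiv (t : ℝ) : HasDerivAt (fun s : ℝ => U (s • x) - L / 2 * ‖x‖ ^ 2 * s ^ 2)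
      (inner ℝ (gradient U (t • x)) x - L * t * ‖x‖ ^ 2) t := by
    have hline : HasDerivAt (fun s : ℝ => s • x) x t := by
      simpa using (hasDerivAt_id t).smul_const x
    have hU := (hdiff (t • x)).hasGradientAt.hasFDerivAt.comp_hasDerivAt t hline
    have hsq := (hasDerivAt_pow 2 t).const_mul (L / 2 * ‖x‖ ^ 2)
    refine (hU.sub hsq).congr_deriv ?_
    rw [InnerProductSpace.toDual_apply_apply]
    push_cast
    ring
  have hanti : AntitoneOn (fun s : ℝ => U (s • x) - L / 2 * ‖x‖ ^ 2 * s ^ 2) (Set.Icc 0 1) := by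
    refine antitoneOn_of_deriv_nonpos (convex_Icc 0 1)
      (fun t _ => (hderiv t).continuousAt.continuousWithinAt)
      (fun t _ => (hderiv t).differentiableAt.differentiableWithinAt) fun t ht => ?_
    rw [interior_Icc] at ht
    rw [(hderiv t).deriv]
    have hg := hlip (t • x) 0
    rw [hgrad0, sub_zero, sub_zero, norm_smul, Real.norm_of_nonneg ht.1.le] at hg
    have hinner := real_inner_le_norm (gradient U (t • x)) x
    nlinarith [mul_le_mul_of_nonneg_right hg (norm_nonneg x)]
  have h := hanti (Set.left_mem_Icc.2 zero_le_one) (Set.right_mem_Icc.2 zero_le_one) zero_le_one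
  simp only [one_smul, zero_smul] at h
  linarith

/-- The Gibbs inequality for two positive functions with the same integral. -/
theorem integral_mul_log_sub_log_nonpos {α : Type*} [MeasurableSpace α] {μ : Measure α}
    {p q : α → ℝ} (hp : ∀ x, 0 < p x) (hq : ∀ x, 0 < q x)
    (hpint : Integrable p μ) (hqint : Integrable q μ) (hpq : ∫ x, p x ∂μ = ∫ x, q x ∂μ)
    (hint : Integrable (fun x => p x * (log (q x) - log (p x))) μ) :
    ∫ x, p x * (log (q x) - log (p x)) ∂μ ≤ 0 := by
  have h : ∫ x, p x * (log (q x) - log (p x)) ∂μ ≤ ∫ x, (q x - p x) ∂μ := by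
    refine integral_mono hint (hqint.sub hpint) fun x => ?_
    have hlog := log_le_sub_one_of_pos (div_pos (hq x) (hp x))
    rw [log_div (hq x).ne' (hp x).ne'] at hlog
    calc p x * (log (q x) - log (p x)) ≤ p x * (q x / p x - 1) :=
          mul_le_mul_of_nonneg_left hlog (hp x).le
      _ = q x - p x := by field_simp [(hp x).ne']
  rwa [integral_sub hqint hpint, hpq, sub_self] at h

/-- The Gaussian `exp (-b ‖v‖ ^ 2)` is integrable on a Euclidean space. -/
theorem integrable_exp_neg_mul_sq_norm {d : ℕ} {b : ℝ} (hb : 0 < b) :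
    Integrable (fun v : EuclideanSpace ℝ (Fin d) => exp (-b * ‖v‖ ^ 2)) := by
  refine Integrable.of_integral_ne_zero ?_
  rw [GaussianFourier.integral_rexp_neg_mul_sq_norm hb]
  positivity

/-- Logarithm of the Gaussian integral on a Euclidean space. -/
theorem log_integral_exp_neg_mul_sq_norm {d : ℕ} {b : ℝ} (hb : 0 < b) :
    log (∫ v : EuclideanSpace ℝ (Fin d), exp (-b * ‖v‖ ^ 2)) = d / 2 * log (π / b) := by
  rw [GaussianFourier.integral_rexp_neg_mul_sq_norm hb, log_rpow (by positivity),
    finrank_euclideanSpace_fin]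

/-- Lemma 2 of the paper: for the Gibbs density ρ ∝ exp(-βU) with global
minimizer θ* = 0 and second moment ≤ C_β/β, the suboptimality of the mean
energy satisfies Ū_β - U(0) ≤ (d/(2β)) log(e C_β L / d). -/
theorem stmt_5 {d : ℕ} (hd : 0 < d) (U : EuclideanSpace ℝ (Fin d) → ℝ)
    (L β Cβ : ℝ) (hL : 0 < L) (hβ : 0 < β) (hC : 0 < Cβ)
    (hdiff : Differentiable ℝ U)
    (hlip : ∀ θ θ' : EuclideanSpace ℝ (Fin d),
      ‖gradient U θ - gradient U θ'‖ ≤ L * ‖θ - θ'‖)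
    (hmin : ∀ θ, U (0 : EuclideanSpace ℝ (Fin d)) ≤ U θ)
    (Zβ : ℝ)
    (hZ : Zβ = ∫ θ : EuclideanSpace ℝ (Fin d), Real.exp (-(β * U θ)))
    (hZint : Integrable (fun θ : EuclideanSpace ℝ (Fin d) => Real.exp (-(β * U θ))))
    (ρ : EuclideanSpace ℝ (Fin d) → ℝ)
    (hρ : ∀ θ, ρ θ = Real.exp (-(β * U θ)) / Zβ)
    (hUint : Integrable (fun θ : EuclideanSpace ℝ (Fin d) => U θ * ρ θ))
    (hmom_int : Integrable (fun θ : EuclideanSpace ℝ (Fin d) => ‖θ‖ ^ 2 * ρ θ))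
    (hmom : ∫ θ : EuclideanSpace ℝ (Fin d), ‖θ‖ ^ 2 * ρ θ ≤ Cβ / β) :
    (∫ θ : EuclideanSpace ℝ (Fin d), U θ * ρ θ) - U (0 : EuclideanSpace ℝ (Fin d)) ≤
      (d : ℝ) / (2 * β) * Real.log (Real.exp 1 * Cβ * L / d) := by
  have hZpos : 0 < Zβ := hZ ▸ integral_exp_pos hZint
  have hb : 0 < β * L / 2 := by positivity
  -- Lower bound on the partition function.
  have hlogZ : -(β * U 0) + d / 2 * log (π / (β * L / 2)) ≤ log Zβ := by
    have hle : exp (-(β * U 0)) * ∫ v : EuclideanSpace ℝ (Fin d), exp (-(β * L / 2) * ‖v‖ ^ 2)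
        ≤ Zβ := by
      rw [hZ, ← integral_const_mul]
      refine integral_mono ((integrable_exp_neg_mul_sq_norm hb).const_mul _) hZint fun θ => ?_
      simp only [← exp_add]
      refine exp_le_exp.2 ?_
      have h := mul_le_mul_of_nonneg_left
        (le_add_sq_norm_of_gradient_lipschitz hdiff hlip hmin θ) hβ.le
      linarith
    have hGpos := integral_exp_pos (integrable_exp_neg_mul_sq_norm (d := d) hb)
    rw [← log_integral_exp_neg_mul_sq_norm hb, ← log_exp (-(β * U 0)),
      ← log_mul (exp_pos _).ne' hGpos.ne']
    exact log_le_log (mul_pos (exp_pos _) hGpos) hle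
  -- The Gibbs inequality against the Gaussian density of matching second moment.
  have hd' : (0 : ℝ) < d := Nat.cast_pos.2 hd
  obtain ⟨c, hc⟩ : ∃ c : ℝ, c = d * β / (2 * Cβ) := ⟨_, rfl⟩
  have hcpos : 0 < c := by rw [hc]; positivity
  obtain ⟨G, hG⟩ : ∃ G : ℝ, G = ∫ v : EuclideanSpace ℝ (Fin d), exp (-c * ‖v‖ ^ 2) := ⟨_, rfl⟩
  have hGpos : 0 < G := hG ▸ integral_exp_pos (integrable_exp_neg_mul_sq_norm hcpos)
  have hlogG : log G = d / 2 * log (π / c) := hG ▸ log_integral_exp_neg_mul_sq_norm hcpos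
  have hρint : Integrable ρ := (hZint.div_const Zβ).congr (.of_forall fun θ => (hρ θ).symm)
  have hρone : ∫ θ, ρ θ = 1 := by
    simp_rw [hρ]
    rw [integral_div, ← hZ, div_self hZpos.ne']
  have hexpand (θ : EuclideanSpace ℝ (Fin d)) :
      ρ θ * (log (exp (-c * ‖θ‖ ^ 2) / G) - log (ρ θ)) =
        β * (U θ * ρ θ) - c * (‖θ‖ ^ 2 * ρ θ) + (log Zβ - log G) * ρ θ := by
    have hlogρ : log (ρ θ) = -(β * U θ) - log Zβ := by
      rw [hρ, log_div (exp_pos _).ne' hZpos.ne', log_exp]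
    rw [hlogρ, log_div (exp_pos _).ne' hGpos.ne', log_exp]
    ring
  have hdiffint : Integrable (fun θ => β * (U θ * ρ θ) - c * (‖θ‖ ^ 2 * ρ θ)) :=
    (hUint.const_mul β).sub (hmom_int.const_mul c)
  have hgibbs : ∫ θ, (β * (U θ * ρ θ) - c * (‖θ‖ ^ 2 * ρ θ) + (log Zβ - log G) * ρ θ) ≤ 0 := by
    simp_rw [← hexpand]
    refine integral_mul_log_sub_log_nonpos (fun θ => ?_) (fun θ => by positivity) hρint
      ((integrable_exp_neg_mul_sq_norm hcpos).div_const G) ?_ ?_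
    · rw [hρ]; positivity
    · rw [hρone, integral_div, ← hG, div_self hGpos.ne']
    · simp_rw [hexpand]
      exact hdiffint.add (hρint.const_mul _)
  rw [integral_add hdiffint (hρint.const_mul _),
    integral_sub (hUint.const_mul β) (hmom_int.const_mul c), integral_const_mul,
    integral_const_mul, integral_const_mul, hρone] at hgibbs
  have hmom' : c * ∫ θ, ‖θ‖ ^ 2 * ρ θ ≤ d / 2 := by
    calc c * ∫ θ, ‖θ‖ ^ 2 * ρ θ ≤ c * (Cβ / β) := mul_le_mul_of_nonneg_left hmom hcpos.le
      _ = d / 2 := by rw [hc]; field_simp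
  have hlogs : log (exp 1 * Cβ * L / d) = 1 + log (π / c) - log (π / (β * L / 2)) := by
    have hquot : exp 1 * Cβ * L / d = exp 1 * ((π / c) / (π / (β * L / 2))) := by
      rw [hc]; field_simp
    rw [hquot, log_mul (exp_pos _).ne' (by positivity), log_exp,
      log_div (by positivity) (by positivity)]
    ring
  have hfinal : β * ((∫ θ, U θ * ρ θ) - U 0) ≤ d / 2 * log (exp 1 * Cβ * L / d) := by
    rw [hlogs]
    linarith
  calc (∫ θ, U θ * ρ θ) - U 0 ≤ (d / 2 * log (exp 1 * Cβ * L / d)) / β := by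
        rwa [le_div_iff₀' hβ]
    _ = d / (2 * β) * log (exp 1 * Cβ * L / d) := by field_simp
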